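/- Let n ≥ 1 be an integer, Ω ⊂ ℝⁿ a bounded open set, T > 0, x₀ ∈ ℝⁿ \ cl(Ω), β ∈ (0,1) with sup_{x∈Ω}|x−x₀| < βT, and C₀ > 0 such that ψ ≥ 1 on Ω × (−T,T), where ψ(x,t) = |x−x₀|² − βt² + C₀; for λ ≥ 1 set φ = e^{λψ}. Let η ∈ (0,T) and ε ∈ (0,1) satisfy (1−ε)(T−η)β ≥ sup_{x∈Ω}|x−x₀|. Then there exist c* > 0 and s₀ > 0 such that for every s ≥ s₀ and every smooth z : ℝⁿ × ℝ → ℝ vanishing for x outside a compact subset of Ω, the weighted energy E_s(t) = (1/2) ∫_Ω e^{2sφ(x,t)} (|∂ₜz|² + |∇z|²) dx satisfies, for every t ∈ [T−η, T]: E_s(t) ≤ E_s(T−η) e^{−s c* (t−(T−η))} + (1/(2 s c*)) ∫_{T−η}^{T} ∫_Ω e^{2sφ} |∂ₜ²z − Δz|² dx dτ. -/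

import Mathlib

open MeasureTheory Real Set
open scoped RealInnerProductSpace

/-- The Laplacian of a real-valued function on Euclidean space. -/
noncomputable def lap {n : ℕ} (f : EuclideanSpace ℝ (Fin n) → ℝ) (x : EuclideanSpace ℝ (Fin n)) : ℝ :=
  ∑ i : Fin n, fderiv ℝ (fun y => fderiv ℝ f y (EuclideanSpace.single i 1)) x (EuclideanSpace.single i 1)

/-- The weight `ψ(x,t) = |x - x₀|² - β t² + C₀`. -/
noncomputable def psi {n : ℕ} (x₀ : EuclideanSpace ℝ (Fin n)) (β C₀ : ℝ)
    (x : EuclideanSpace ℝ (Fin n)) (t : ℝ) : ℝ :=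
  ‖x - x₀‖ ^ 2 - β * t ^ 2 + C₀

/-- The Carleman weight `φ = e^{λψ}`. -/
noncomputable def phi {n : ℕ} (x₀ : EuclideanSpace ℝ (Fin n)) (β C₀ l : ℝ)
    (x : EuclideanSpace ℝ (Fin n)) (t : ℝ) : ℝ :=
  Real.exp (l * psi x₀ β C₀ x t)


lemma aux_supp {V : Type*} [NormedAddCommGroup V] [NormedSpace ℝ V] {K : Set V} (hK : IsClosed K)
    {g : V × ℝ → ℝ} (h0 : ∀ q : V × ℝ, q.1 ∉ K → g q = 0) (v : V × ℝ) :
    ∀ q : V × ℝ, q.1 ∉ K → fderiv ℝ g q v = 0 := by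
  intro q hq
  have : g =ᶠ[nhds q] fun _ => 0 := by
    have ho : IsOpen {q : V × ℝ | q.1 ∉ K} := hK.isOpen_compl.preimage continuous_fst
    filter_upwards [ho.mem_nhds hq] with p hp using h0 p hp
  rw [this.fderiv_eq]
  simp

lemma aux_smooth {V : Type*} [NormedAddCommGroup V] [NormedSpace ℝ V]
    {g : V × ℝ → ℝ} (hg : ContDiff ℝ (⊤ : ℕ∞) g) (v : V × ℝ) :
    ContDiff ℝ (⊤ : ℕ∞) (fun q => fderiv ℝ g q v) :=
  (hg.fderiv_right (m := (⊤ : ℕ∞)) (by simp)).clm_apply contDiff_const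

lemma aux_diff {V : Type*} [NormedAddCommGroup V] [NormedSpace ℝ V]
    {g : V × ℝ → ℝ} (hg : ContDiff ℝ (⊤ : ℕ∞) g) : Differentiable ℝ g :=
  hg.differentiable (by simp)

lemma aux_t {V : Type*} [NormedAddCommGroup V] [NormedSpace ℝ V]
    {g : V × ℝ → ℝ} (hg : Differentiable ℝ g) (x : V) (t : ℝ) :
    HasDerivAt (fun t => g (x, t)) (fderiv ℝ g (x, t) (0, 1)) t := by
  have h1 : HasDerivAt (fun t : ℝ => (x, t)) ((0 : V), (1:ℝ)) t :=
    (hasDerivAt_const t x).prodMk (hasDerivAt_id t)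
  exact (hg (x, t)).hasFDerivAt.comp_hasDerivAt t h1

lemma aux_x {V : Type*} [NormedAddCommGroup V] [NormedSpace ℝ V]
    {g : V × ℝ → ℝ} (hg : Differentiable ℝ g) (x : V) (t : ℝ) (v : V) :
    fderiv ℝ (fun y => g (y, t)) x v = fderiv ℝ g (x, t) (v, 0) := by
  have h1 : HasFDerivAt (fun y : V => (y, t)) (ContinuousLinearMap.inl ℝ V ℝ) x :=
    hasFDerivAt_prodMk_left x t
  have := (hg (x, t)).hasFDerivAt.comp x h1
  have h2 := this.fderiv
  rw [show (fun y => g (y, t)) = g ∘ (fun y => (y, t)) from rfl, h2]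
  simp

lemma aux_integrable {V : Type*} [NormedAddCommGroup V] [NormedSpace ℝ V] [MeasurableSpace V]
    [BorelSpace V] [FiniteDimensional ℝ V] (μ : Measure V) [μ.IsAddHaarMeasure]
    {K : Set V} (hK : IsCompact K)
    {g : V × ℝ → ℝ} (hg : Continuous g) (h0 : ∀ q : V × ℝ, q.1 ∉ K → g q = 0) (t : ℝ) :
    Integrable (fun x => g (x, t)) μ := by
  apply Continuous.integrable_of_hasCompactSupport (by fun_prop)
  exact HasCompactSupport.intro hK (fun x hx => h0 (x, t) hx)

lemma aux_param {V : Type*} [NormedAddCommGroup V] [NormedSpace ℝ V] [MeasurableSpace V]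
    [BorelSpace V] [FiniteDimensional ℝ V] (μ : Measure V) [μ.IsAddHaarMeasure]
    {K : Set V} (hK : IsCompact K)
    {g : V × ℝ → ℝ} (hg : ContDiff ℝ (⊤ : ℕ∞) g) (h0 : ∀ q : V × ℝ, q.1 ∉ K → g q = 0) (t : ℝ) :
    HasDerivAt (fun t => ∫ x, g (x, t) ∂μ) (∫ x, fderiv ℝ g (x, t) (0, 1) ∂μ) t := by
  have hs := aux_smooth hg (0, 1)
  have hs0 := aux_supp hK.isClosed h0 (0, 1)
  obtain ⟨C, hC⟩ := (hK.prod (isCompact_closedBall t 1)).exists_bound_of_continuousOn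
    hs.continuous.continuousOn
  refine (hasDerivAt_integral_of_dominated_loc_of_deriv_le (μ := μ)
    (F := fun t x => g (x, t)) (F' := fun t x => fderiv ℝ g (x, t) (0, 1))
    (bound := K.indicator (fun _ => C))
    (Metric.closedBall_mem_nhds t one_pos) ?_ ?_ ?_ ?_ ?_ ?_).2
  · exact Filter.Eventually.of_forall fun t =>
      (aux_integrable μ hK hg.continuous h0 t).aestronglyMeasurable
  · exact aux_integrable μ hK hg.continuous h0 t
  · exact (aux_integrable μ hK hs.continuous hs0 t).aestronglyMeasurable
  · refine Filter.Eventually.of_forall fun x τ hτ => ?_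
    by_cases hx : x ∈ K
    · simpa [hx] using hC (x, τ) ⟨hx, hτ⟩
    · simp [hx, hs0 (x, τ) hx]
  · rw [integrable_indicator_iff hK.measurableSet]
    exact integrableOn_const hK.measure_lt_top.ne
  · exact Filter.Eventually.of_forall fun x τ _ => aux_t (aux_diff hg) x τ

lemma aux_ibp {V : Type*} [NormedAddCommGroup V] [NormedSpace ℝ V] [MeasurableSpace V]
    [BorelSpace V] [FiniteDimensional ℝ V] (μ : Measure V) [μ.IsAddHaarMeasure]
    {K : Set V} (hK : IsCompact K)
    {g : V × ℝ → ℝ} (hg : ContDiff ℝ (⊤ : ℕ∞) g) (h0 : ∀ q : V × ℝ, q.1 ∉ K → g q = 0) (t : ℝ)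
    (v : V) : ∫ x, fderiv ℝ g (x, t) (v, 0) ∂μ = 0 := by
  have hs := aux_smooth hg (v, 0)
  have hs0 := aux_supp hK.isClosed h0 (v, 0)
  have hd : Differentiable ℝ (fun y => g (y, t)) :=
    (aux_diff hg).comp (differentiable_id.prodMk (differentiable_const t))
  have := integral_mul_fderiv_eq_neg_fderiv_mul_of_integrable (μ := μ) (v := v)
    (f := fun _ : V => (1:ℝ)) (g := fun y => g (y, t)) (by simp)
    (by simpa [aux_x (aux_diff hg)] using aux_integrable μ hK hs.continuous hs0 t)
    (by simpa using aux_integrable μ hK hg.continuous h0 t)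
    (by fun_prop) (fun x _ => hd x)
  simpa [aux_x (aux_diff hg)] using this

lemma aux_symm {V : Type*} [NormedAddCommGroup V] [NormedSpace ℝ V]
    {g : V × ℝ → ℝ} (hg : ContDiff ℝ (⊤ : ℕ∞) g) (v w : V × ℝ) (q : V × ℝ) :
    fderiv ℝ (fun p => fderiv ℝ g p v) q w = fderiv ℝ (fun p => fderiv ℝ g p w) q v := by
  have hd : DifferentiableAt ℝ (fderiv ℝ g) q :=
    (hg.fderiv_right (m := (⊤ : ℕ∞)) (by simp)).differentiable (by simp) q
  have hsym : IsSymmSndFDerivAt ℝ g q := hg.contDiffAt.isSymmSndFDerivAt (by simpa using (by exact_mod_cast le_top : ((2:ℕ∞) : WithTop ℕ∞) ≤ ((⊤:ℕ∞) : WithTop ℕ∞)))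
  have key : ∀ a b, fderiv ℝ (fun p => fderiv ℝ g p a) q b = fderiv ℝ (fderiv ℝ g) q b a := by
    intro a b
    rw [fderiv_clm_apply hd (by fun_prop)]
    simp
  rw [key, key]
  exact hsym.eq _ _

lemma aux_grad {n : ℕ} {f : EuclideanSpace ℝ (Fin n) → ℝ} {x : EuclideanSpace ℝ (Fin n)} :
    ‖gradient f x‖ ^ 2 = ∑ i, (fderiv ℝ f x (EuclideanSpace.single i 1)) ^ 2 := by
  rw [EuclideanSpace.norm_sq_eq]
  refine Finset.sum_congr rfl fun i _ => ?_
  have : fderiv ℝ f x (EuclideanSpace.single i 1) = gradient f x i := by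
    have h := InnerProductSpace.toDual_symm_apply (𝕜 := ℝ) (x := EuclideanSpace.single i (1:ℝ)) (y := fderiv ℝ f x)
    rw [← h, EuclideanSpace.inner_single_right]
    simp [gradient]
  rw [this]
  simp

lemma aux_psi {n : ℕ} (x₀ : EuclideanSpace ℝ (Fin n)) (β C₀ l s : ℝ)
    (q v : EuclideanSpace ℝ (Fin n) × ℝ) :
    fderiv ℝ (fun q : EuclideanSpace ℝ (Fin n) × ℝ => exp (2 * s * phi x₀ β C₀ l q.1 q.2)) q v
     = exp (2 * s * phi x₀ β C₀ l q.1 q.2) * (2 * s * (phi x₀ β C₀ l q.1 q.2 *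
        (l * (2 * inner ℝ (q.1 - x₀) v.1 - 2 * β * q.2 * v.2)))) := by
  have h1 : HasFDerivAt (fun q : EuclideanSpace ℝ (Fin n) × ℝ => q.1 - x₀)
      (ContinuousLinearMap.fst ℝ _ ℝ) q := hasFDerivAt_fst.sub_const x₀
  have h2 := h1.norm_sq
  have h3 : HasFDerivAt (fun q : EuclideanSpace ℝ (Fin n) × ℝ => q.2)
      (ContinuousLinearMap.snd ℝ _ ℝ) q := hasFDerivAt_snd
  have h4 := (((((h2.sub ((h3.pow 2).const_mul β)).add_const C₀).const_mul l).exp).const_mul (2 * s)).exp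
  have h5 := h4.fderiv
  unfold phi psi
  erw [h5]
  simp [inner_sub_left]
  ring_nf
  simp

lemma aux_w {n : ℕ} (x₀ : EuclideanSpace ℝ (Fin n)) (β C₀ l s : ℝ) :
    ContDiff ℝ (⊤ : ℕ∞)
    (fun q : EuclideanSpace ℝ (Fin n) × ℝ => exp (2 * s * phi x₀ β C₀ l q.1 q.2)) := by
  unfold phi psi
  have : ContDiff ℝ (⊤ : ℕ∞) (fun q : EuclideanSpace ℝ (Fin n) × ℝ => ‖q.1 - x₀‖ ^ 2) :=
    (contDiff_fst.sub contDiff_const).norm_sq ℝ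
  fun_prop

lemma aux_point {n : ℕ} (r : EuclideanSpace ℝ (Fin n)) (b : Fin n → ℝ) (a f W p l s β t t₀ ε : ℝ)
    (hs : 0 < s) (hl : 1 ≤ l) (hp : 1 ≤ p) (hW : 0 < W) (hβ : 0 < β) (ht₀ : 0 < t₀) (hε : 0 < ε)
    (ht : t₀ ≤ t) (hr : ‖r‖ ≤ (1 - ε) * t₀ * β) :
    -2 * (s * l * p * W) * β * t * (a ^ 2 + ∑ i, b i ^ 2)
      - 4 * (s * l * p * W) * a * (∑ i, r i * b i) + W * a * f
    ≤ -(s * (2 * ε * β * t₀)) * (1 / 2 * (W * (a ^ 2 + ∑ i, b i ^ 2)))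
      + 1 / (2 * s * (2 * ε * β * t₀)) * (W * f ^ 2) := by
  set B := ∑ i, b i ^ 2 with hB
  set X := ∑ i, r i * b i with hX
  have hB0 : 0 ≤ B := Finset.sum_nonneg fun i _ => sq_nonneg _
  have hCS : X ^ 2 ≤ ‖r‖ ^ 2 * B := by
    have := Finset.sum_mul_sq_le_sq_mul_sq Finset.univ (fun i => r i) b
    rw [EuclideanSpace.norm_sq_eq]
    simpa using this
  have hR0 : 0 ≤ ‖r‖ := norm_nonneg r
  -- the cross term
  have h1 : -(2 * (a * X)) ≤ ‖r‖ * (a ^ 2 + B) := by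
    refine (abs_le_of_sq_le_sq' (a := -(2 * (a * X))) ?_ (by positivity)).2
    have e1 : a ^ 2 * X ^ 2 ≤ a ^ 2 * (‖r‖ ^ 2 * B) := by gcongr
    have e2 : 0 ≤ ‖r‖ ^ 2 * (a ^ 2 - B) ^ 2 := by positivity
    nlinarith
  set c := 2 * ε * β * t₀ with hc
  have hc0 : 0 < c := by positivity
  have hsc : 0 < s * c := by positivity
  have hA : s * W ≤ s * l * p * W := by
    have : 1 ≤ l * p := one_le_mul_of_one_le_of_one_le hl hp
    have h2 : 0 < s * W := by positivity
    nlinarith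
  set A := s * l * p * W with hAd
  have hA0 : 0 < A := lt_of_lt_of_le (by positivity) hA
  have he0 : 0 ≤ a ^ 2 + B := by positivity
  have h3 : ‖r‖ - β * t ≤ -(c / 2) := by
    have : β * t₀ ≤ β * t := by gcongr
    rw [hc]; nlinarith
  have h4 : -2 * A * β * t * (a ^ 2 + B) - 4 * A * a * X ≤ -(A * c * (a ^ 2 + B)) := by
    have h5 : 2 * A * (-(2 * (a * X))) ≤ 2 * A * (‖r‖ * (a ^ 2 + B)) := by gcongr
    have h6 : 2 * A * (a ^ 2 + B) * (‖r‖ - β * t) ≤ 2 * A * (a ^ 2 + B) * (-(c / 2)) := by gcongr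
    nlinarith
  have h7 : s * W * (c * (a ^ 2 + B)) ≤ A * (c * (a ^ 2 + B)) := by gcongr
  have h8 : W * a * f ≤ W * (s * c / 2 * a ^ 2 + 1 / (2 * s * c) * f ^ 2) := by
    rw [mul_assoc]
    gcongr
    have h9 : 1 / (2 * s * c) * (s * c * a - f) ^ 2 =
        s * c / 2 * a ^ 2 + 1 / (2 * s * c) * f ^ 2 - a * f := by
      field_simp
      ring
    have : 0 ≤ 1 / (2 * s * c) * (s * c * a - f) ^ 2 := by positivity
    linarith
  have h10 : 0 ≤ W * (s * c / 2 * B) := by positivity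
  linarith

lemma aux_fd {V : Type*} [NormedAddCommGroup V] [NormedSpace ℝ V] {n : ℕ}
    {W a : V → ℝ} {b : Fin n → V → ℝ} (hW : Differentiable ℝ W) (ha : Differentiable ℝ a)
    (hb : ∀ i, Differentiable ℝ (b i)) (q v : V) :
    fderiv ℝ (fun q => W q * (a q ^ 2 + ∑ i, b i q ^ 2)) q v
      = fderiv ℝ W q v * (a q ^ 2 + ∑ i, b i q ^ 2)
        + W q * (2 * a q * fderiv ℝ a q v + ∑ i, 2 * b i q * fderiv ℝ (b i) q v) := by
  have h1 := (hW q).hasFDerivAt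
  have h2 := ((ha q).hasFDerivAt.pow 2)
  have h3 : HasFDerivAt (fun q => ∑ i, b i q ^ 2) _ q :=
    HasFDerivAt.fun_sum (u := Finset.univ) fun i _ => ((hb i q).hasFDerivAt.pow 2)
  have h4 := (h1.mul (h2.add h3)).fderiv
  have h5 := congrArg (fun L => L v) h4
  refine Eq.trans h5 ?_
  simp
  ring

lemma aux_fd2 {V : Type*} [NormedAddCommGroup V] [NormedSpace ℝ V]
    {W a b : V → ℝ} (hW : Differentiable ℝ W) (ha : Differentiable ℝ a)
    (hb : Differentiable ℝ b) (q v : V) :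
    fderiv ℝ (fun q => W q * a q * b q) q v
      = fderiv ℝ W q v * (a q * b q) + W q * (fderiv ℝ a q v * b q + a q * fderiv ℝ b q v) := by
  have h1 := (hW q).hasFDerivAt
  have h4 := ((h1.mul (ha q).hasFDerivAt).mul (hb q).hasFDerivAt).fderiv
  have h5 := congrArg (fun L => L v) h4
  refine Eq.trans h5 ?_
  simp
  ring

lemma aux_ode {E F E' : ℝ → ℝ} {k t₀ T : ℝ} (hk : 0 < k) 
    (hE : ∀ t, HasDerivAt E (E' t) t) (hF : Continuous F) (hF0 : ∀ t, 0 ≤ F t)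
    (h : ∀ t ∈ Ioo t₀ T, E' t ≤ -k * E t + 1 / (2 * k) * F t) :
    ∀ t ∈ Icc t₀ T, E t ≤ E t₀ * exp (-(k * (t - t₀))) + 1 / (2 * k) * ∫ τ in Ioo t₀ T, F τ := by
  have hI : ∀ t, HasDerivAt (fun t => ∫ τ in t₀..t, F τ) (F t) t := fun t =>
    intervalIntegral.integral_hasDerivAt_right (hF.intervalIntegrable _ _)
      (hF.stronglyMeasurableAtFilter _ _) hF.continuousAt
  have hx : ∀ t, HasDerivAt (fun t => exp (k * (t - t₀))) (exp (k * (t - t₀)) * k) t := by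
    intro t
    have := (((hasDerivAt_id t).sub_const t₀).const_mul k).exp
    simpa using this
  have hH := fun t => (hx t).mul ((hE t).sub ((hI t).const_mul (1 / (2 * k))))
  set H : ℝ → ℝ := (fun t => exp (k * (t - t₀))) * (E - fun t => 1 / (2 * k) * ∫ τ in t₀..t, F τ) with hHd
  have hint : ∀ t, t₀ ≤ t → 0 ≤ ∫ τ in t₀..t, F τ := fun t ht =>
    intervalIntegral.integral_nonneg ht fun u _ => hF0 u
  have hanti : AntitoneOn H (Icc t₀ T) := by
    apply antitoneOn_of_deriv_nonpos (convex_Icc _ _)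
    · exact fun t _ => (hH t).continuousAt.continuousWithinAt
    · exact fun t _ => (hH t).differentiableAt.differentiableWithinAt
    · intro t ht
      rw [interior_Icc] at ht
      rw [(hH t).deriv]
      have h1 := h t ht
      have h2 := hint t ht.1.le
      have h3 : 0 < exp (k * (t - t₀)) := exp_pos _
      have h4 : k * (1 / (2 * k) * ∫ τ in t₀..t, F τ) = 1 / 2 * ∫ τ in t₀..t, F τ := by
        field_simp
      simp only [Pi.sub_apply]
      have : exp (k * (t - t₀)) * (k * (E t - 1 / (2 * k) * ∫ τ in t₀..t, F τ) + (E' t - 1 / (2 * k) * F t)) ≤ 0 := by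
        apply mul_nonpos_of_nonneg_of_nonpos h3.le
        linarith
      linarith
  intro t ht
  have h1 := hanti (left_mem_Icc.2 (ht.1.trans ht.2)) ht ht.1
  simp only [hHd, Pi.mul_apply, Pi.sub_apply, sub_self, mul_zero, exp_zero, one_mul,
    intervalIntegral.integral_same, sub_zero] at h1
  have h3 : 0 < exp (-(k * (t - t₀))) := exp_pos _
  have h4 : exp (-(k * (t - t₀))) * exp (k * (t - t₀)) = 1 := by rw [← exp_add]; simp
  have h5 : E t - 1 / (2 * k) * ∫ τ in t₀..t, F τ ≤ E t₀ * exp (-(k * (t - t₀))) := by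
    calc _ = exp (-(k * (t - t₀))) * (exp (k * (t - t₀)) * (E t - 1 / (2 * k) * ∫ τ in t₀..t, F τ)) := by
          rw [← mul_assoc, h4, one_mul]
      _ ≤ exp (-(k * (t - t₀))) * E t₀ := by gcongr
      _ = _ := mul_comm _ _
  have h6 : ∫ τ in t₀..t, F τ ≤ ∫ τ in Ioo t₀ T, F τ := by
    rw [← integral_Ioc_eq_integral_Ioo, ← intervalIntegral.integral_of_le (ht.1.trans ht.2)]
    exact intervalIntegral.integral_mono_interval le_rfl ht.1 ht.2
      (Filter.Eventually.of_forall hF0) (hF.intervalIntegrable _ _)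
  have h7 : 1 / (2 * k) * ∫ τ in t₀..t, F τ ≤ 1 / (2 * k) * ∫ τ in Ioo t₀ T, F τ := by gcongr
  linarith

/-- **Exponential decay of the weighted energy near the final time** (estimate (2.26)):
there exist `c* > 0` and `s₀ > 0` such that for all `s ≥ s₀` and all smooth `z` vanishing (in
space) outside a compact subset of `Ω`, for every `t ∈ [T-η, T]`,
`E_s(t) ≤ E_s(T-η) e^{-sc*(t-(T-η))} + (1/(2sc*)) ∫_{T-η}^T ∫_Ω e^{2sφ}|∂ₜ²z - Δz|²`. -/
theorem energy_decay_near_final_time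
    (n : ℕ) (hn : 1 ≤ n)
    (Ω : Set (EuclideanSpace ℝ (Fin n))) (hΩo : IsOpen Ω) (hΩb : Bornology.IsBounded Ω)
    (T : ℝ) (hT : 0 < T)
    (x₀ : EuclideanSpace ℝ (Fin n)) (hx₀ : x₀ ∉ closure Ω)
    (β : ℝ) (hβ : β ∈ Set.Ioo (0:ℝ) 1)
    (htime : sSup ((fun x => ‖x - x₀‖) '' Ω) < β * T)
    (C₀ : ℝ) (hC₀ : 0 < C₀)
    (hψ : ∀ x ∈ Ω, ∀ t ∈ Set.Ioo (-T) T, 1 ≤ psi x₀ β C₀ x t)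
    (l : ℝ) (hl : 1 ≤ l)
    (η : ℝ) (hη : η ∈ Set.Ioo (0:ℝ) T) (ε : ℝ) (hε : ε ∈ Set.Ioo (0:ℝ) 1)
    (hsup : sSup ((fun x => ‖x - x₀‖) '' Ω) ≤ (1 - ε) * (T - η) * β) :
    ∃ c > (0:ℝ), ∃ s₀ > (0:ℝ), ∀ s ≥ s₀,
      ∀ z : EuclideanSpace ℝ (Fin n) → ℝ → ℝ,
        ContDiff ℝ (⊤ : ℕ∞) (fun q : EuclideanSpace ℝ (Fin n) × ℝ => z q.1 q.2) →
        (∃ K : Set (EuclideanSpace ℝ (Fin n)), IsCompact K ∧ K ⊆ Ω ∧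
          ∀ x ∉ K, ∀ t : ℝ, z x t = 0) →
        ∀ t ∈ Set.Icc (T - η) T,
          (1 / 2 : ℝ) * (∫ x in Ω, Real.exp (2 * s * phi x₀ β C₀ l x t) *
              ((deriv (z x) t) ^ 2 + ‖gradient (fun y => z y t) x‖ ^ 2))
            ≤ ((1 / 2 : ℝ) * ∫ x in Ω, Real.exp (2 * s * phi x₀ β C₀ l x (T - η)) *
                  ((deriv (z x) (T - η)) ^ 2 + ‖gradient (fun y => z y (T - η)) x‖ ^ 2)) *
                Real.exp (-(s * c * (t - (T - η))))
              + (1 / (2 * s * c)) * ∫ τ in Set.Ioo (T - η) T, ∫ x in Ω,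
                  Real.exp (2 * s * phi x₀ β C₀ l x τ) *
                    (deriv (deriv (z x)) τ - lap (fun y => z y τ) x) ^ 2 := by
  obtain ⟨hβ0, hβ1⟩ := hβ
  obtain ⟨hη0, hη1⟩ := hη
  obtain ⟨hε0, hε1⟩ := hε
  have ht₀ : 0 < T - η := by linarith
  have hR : ∀ x ∈ Ω, ‖x - x₀‖ ≤ (1 - ε) * (T - η) * β := by
    intro x hx
    refine le_trans (le_csSup ?_ (mem_image_of_mem (fun x => ‖x - x₀‖) hx)) hsup
    obtain ⟨R, hR⟩ := hΩb.subset_closedBall x₀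
    refine ⟨R, ?_⟩
    rintro _ ⟨y, hy, rfl⟩
    simpa [dist_eq_norm] using hR hy
  refine ⟨2 * ε * β * (T - η), by positivity, 1, one_pos, ?_⟩
  rintro s hs z hz ⟨K, hK, hKΩ, hzK⟩
  have hs0 : 0 < s := by linarith
  set c := 2 * ε * β * (T - η) with hc
  have hc0 : 0 < c := by positivity
  set Z : EuclideanSpace ℝ (Fin n) × ℝ → ℝ := fun q => z q.1 q.2 with hZ
  have hZ0 : ∀ q : EuclideanSpace ℝ (Fin n) × ℝ, q.1 ∉ K → Z q = 0 := fun q hq => hzK _ hq _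
  set W : EuclideanSpace ℝ (Fin n) × ℝ → ℝ :=
    fun q => exp (2 * s * phi x₀ β C₀ l q.1 q.2) with hWd
  have hW : ContDiff ℝ (⊤ : ℕ∞) W := aux_w x₀ β C₀ l s
  set ei : Fin n → EuclideanSpace ℝ (Fin n) × ℝ := fun i => (EuclideanSpace.single i 1, 0) with hei
  set a : EuclideanSpace ℝ (Fin n) × ℝ → ℝ := fun q => fderiv ℝ Z q (0, 1) with had
  set b : Fin n → EuclideanSpace ℝ (Fin n) × ℝ → ℝ := fun i q => fderiv ℝ Z q (ei i) with hbd
  have ha : ContDiff ℝ (⊤ : ℕ∞) a := aux_smooth hz _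
  have hb : ∀ i, ContDiff ℝ (⊤ : ℕ∞) (b i) := fun i => aux_smooth hz _
  have ha0 : ∀ q : EuclideanSpace ℝ (Fin n) × ℝ, q.1 ∉ K → a q = 0 := aux_supp hK.isClosed hZ0 _
  have hb0 : ∀ i, ∀ q : EuclideanSpace ℝ (Fin n) × ℝ, q.1 ∉ K → b i q = 0 :=
    fun i => aux_supp hK.isClosed hZ0 _
  set f : EuclideanSpace ℝ (Fin n) × ℝ → ℝ :=
    fun q => fderiv ℝ a q (0, 1) - ∑ i, fderiv ℝ (b i) q (ei i) with hfd
  have hf : ContDiff ℝ (⊤ : ℕ∞) f :=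
    (aux_smooth ha _).sub (ContDiff.sum fun i _ => aux_smooth (hb i) _)
  have hf0 : ∀ q : EuclideanSpace ℝ (Fin n) × ℝ, q.1 ∉ K → f q = 0 := by
    intro q hq
    simp only [hfd]
    rw [aux_supp hK.isClosed ha0 _ q hq,
      Finset.sum_eq_zero fun i _ => aux_supp hK.isClosed (hb0 i) _ q hq, sub_zero]
  set e : EuclideanSpace ℝ (Fin n) × ℝ → ℝ := fun q => W q * (a q ^ 2 + ∑ i, b i q ^ 2) with hed
  have he : ContDiff ℝ (⊤ : ℕ∞) e :=
    hW.mul ((ha.pow 2).add (ContDiff.sum fun i _ => (hb i).pow 2))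
  have he0 : ∀ q : EuclideanSpace ℝ (Fin n) × ℝ, q.1 ∉ K → e q = 0 := by
    intro q hq
    simp [hed, ha0 q hq, fun i => hb0 i q hq]
  set F : EuclideanSpace ℝ (Fin n) × ℝ → ℝ := fun q => W q * f q ^ 2 with hFd
  have hF : ContDiff ℝ (⊤ : ℕ∞) F := hW.mul (hf.pow 2)
  have hF0 : ∀ q : EuclideanSpace ℝ (Fin n) × ℝ, q.1 ∉ K → F q = 0 := by
    intro q hq
    simp [hFd, hf0 q hq]
  set P : Fin n → EuclideanSpace ℝ (Fin n) × ℝ → ℝ := fun i q => W q * a q * b i q with hPd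
  have hP : ∀ i, ContDiff ℝ (⊤ : ℕ∞) (P i) := fun i => (hW.mul ha).mul (hb i)
  have hP0 : ∀ i, ∀ q : EuclideanSpace ℝ (Fin n) × ℝ, q.1 ∉ K → P i q = 0 := by
    intro i q hq
    simp [hPd, ha0 q hq]
  -- identification of the quantities in the statement
  have id_t : ∀ x t, deriv (z x) t = a (x, t) := fun x t => (aux_t (aux_diff hz) x t).deriv
  have id_tt : ∀ x t, deriv (deriv (z x)) t = fderiv ℝ a (x, t) (0, 1) := by
    intro x t
    rw [show deriv (z x) = fun t => a (x, t) from funext fun t => id_t x t]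
    exact (aux_t (aux_diff ha) x t).deriv
  have id_x : ∀ t x i, fderiv ℝ (fun y => z y t) x (EuclideanSpace.single i 1) = b i (x, t) :=
    fun t x i => aux_x (aux_diff hz) x t _
  have id_lap : ∀ t x, lap (fun y => z y t) x = ∑ i, fderiv ℝ (b i) (x, t) (ei i) := by
    intro t x
    unfold lap
    refine Finset.sum_congr rfl fun i _ => ?_
    simp only [id_x]
    exact aux_x (aux_diff (hb i)) x t _
  have id_e : ∀ t, ∫ x in Ω, Real.exp (2 * s * phi x₀ β C₀ l x t) *
              ((deriv (z x) t) ^ 2 + ‖gradient (fun y => z y t) x‖ ^ 2) = ∫ x, e (x, t) := by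
    intro t
    rw [← setIntegral_eq_integral_of_forall_compl_eq_zero (s := Ω)
      (fun x hx => he0 (x, t) fun h => hx (hKΩ h))]
    simp only [id_t, aux_grad, id_x, hed, hWd]
  have id_F : ∀ t, ∫ x in Ω, Real.exp (2 * s * phi x₀ β C₀ l x t) *
              (deriv (deriv (z x)) t - lap (fun y => z y t) x) ^ 2 = ∫ x, F (x, t) := by
    intro t
    rw [← setIntegral_eq_integral_of_forall_compl_eq_zero (s := Ω)
      (fun x hx => hF0 (x, t) fun h => hx (hKΩ h))]
    simp only [id_tt, id_lap, hFd, hWd, hfd]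
  simp only [id_e, id_F]
  have hode := aux_ode (E := fun t => 1 / 2 * ∫ x, e (x, t)) (F := fun t => ∫ x, F (x, t))
    (E' := fun t => 1 / 2 * ∫ x, fderiv ℝ e (x, t) (0, 1)) (k := s * c) (t₀ := T - η) (T := T)
    (by positivity) (fun t => (aux_param volume hK he he0 t).const_mul _)
    (continuous_iff_continuousAt.2 fun t => (aux_param volume hK hF hF0 t).continuousAt)
    (fun t => integral_nonneg fun x => mul_nonneg (exp_pos _).le (sq_nonneg _)) ?_
  · intro t ht
    have := hode t ht
    simpa only [mul_assoc] using this
  intro t ht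
  -- the divergence term integrates to zero
  have ie := aux_integrable volume hK he.continuous he0 t
  have iF := aux_integrable volume hK hF.continuous hF0 t
  have iet := aux_integrable volume hK (aux_smooth he (0, 1)).continuous
    (aux_supp hK.isClosed he0 (0, 1)) t
  have iP : ∀ i, Integrable (fun x => fderiv ℝ (P i) (x, t) (ei i)) volume := fun i =>
    aux_integrable volume hK (aux_smooth (hP i) (ei i)).continuous
      (aux_supp hK.isClosed (hP0 i) (ei i)) t
  have hdiv : ∫ x, ∑ i, fderiv ℝ (P i) (x, t) (ei i) = 0 := by
    rw [integral_finsetSum _ fun i _ => iP i]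
    exact Finset.sum_eq_zero fun i _ => aux_ibp volume hK (hP i) (hP0 i) t _
  have hLHS : 1 / 2 * ∫ x, fderiv ℝ e (x, t) (0, 1) =
      ∫ x, (1 / 2 * fderiv ℝ e (x, t) (0, 1) - ∑ i, fderiv ℝ (P i) (x, t) (ei i)) := by
    rw [integral_sub (iet.const_mul _) (integrable_finsetSum _ fun i _ => iP i), hdiv, sub_zero,
      integral_const_mul]
  have hRHS : -(s * c) * (1 / 2 * ∫ x, e (x, t)) + 1 / (2 * (s * c)) * ∫ x, F (x, t) =
      ∫ x, (-(s * c) * (1 / 2 * e (x, t)) + 1 / (2 * (s * c)) * F (x, t)) := by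
    rw [integral_add ((ie.const_mul _).const_mul _) (iF.const_mul _), integral_const_mul,
      integral_const_mul, integral_const_mul]
  show 1 / 2 * ∫ x, fderiv ℝ e (x, t) (0, 1) ≤
    -(s * c) * (1 / 2 * ∫ x, e (x, t)) + 1 / (2 * (s * c)) * ∫ x, F (x, t)
  rw [hLHS, hRHS]
  refine integral_mono ((iet.const_mul _).sub (integrable_finsetSum _ fun i _ => iP i))
    (((ie.const_mul _).const_mul _).add (iF.const_mul _)) fun x => ?_
  show 1 / 2 * fderiv ℝ e (x, t) (0, 1) - ∑ i, fderiv ℝ (P i) (x, t) (ei i) ≤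
    -(s * c) * (1 / 2 * e (x, t)) + 1 / (2 * (s * c)) * F (x, t)
  by_cases hx : x ∈ K
  swap
  · rw [aux_supp hK.isClosed he0 _ (x, t) hx, he0 (x, t) hx, hF0 (x, t) hx,
      Finset.sum_eq_zero fun i _ => aux_supp hK.isClosed (hP0 i) _ (x, t) hx]
    simp
  have hxΩ := hKΩ hx
  have hp : 1 ≤ phi x₀ β C₀ l x t := by
    have h1 := hψ x hxΩ t ⟨by linarith [ht.1], ht.2⟩
    unfold phi
    apply one_le_exp
    nlinarith
  have key := aux_point (x - x₀) (fun i => b i (x, t)) (a (x, t)) (f (x, t)) (W (x, t))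
    (phi x₀ β C₀ l x t) l s β t (T - η) ε hs0 hl hp (exp_pos _) hβ0 ht₀ hε0 ht.1.le (hR x hxΩ)
  have hsum : ∑ i, fderiv ℝ (P i) (x, t) (ei i) =
      4 * (s * l * phi x₀ β C₀ l x t * W (x, t)) * a (x, t) * (∑ i, (x - x₀) i * b i (x, t))
      + W (x, t) * ∑ i, b i (x, t) * fderiv ℝ (b i) (x, t) (0, 1)
      + W (x, t) * a (x, t) * ∑ i, fderiv ℝ (b i) (x, t) (ei i) := by
    rw [Finset.mul_sum, Finset.mul_sum, Finset.mul_sum, ← Finset.sum_add_distrib,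
      ← Finset.sum_add_distrib]
    refine Finset.sum_congr rfl fun i _ => ?_
    have h1 := aux_fd2 (aux_diff hW) (aux_diff ha) (aux_diff (hb i)) (x, t) (ei i)
    have h2 : fderiv ℝ a (x, t) (ei i) = fderiv ℝ (b i) (x, t) (0, 1) := aux_symm hz _ _ _
    have h3 : fderiv ℝ W (x, t) (ei i) = W (x, t) * (2 * s * (phi x₀ β C₀ l x t *
        (l * (2 * (x - x₀) i)))) := by
      refine (aux_psi x₀ β C₀ l s (x, t) (ei i)).trans ?_
      simp [hei, hWd, EuclideanSpace.inner_single_right]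
    refine h1.trans ?_
    rw [h2, h3]
    ring
  have het : fderiv ℝ e (x, t) (0, 1) =
      -4 * (s * l * phi x₀ β C₀ l x t * W (x, t)) * β * t * (a (x, t) ^ 2 + ∑ i, b i (x, t) ^ 2)
      + 2 * W (x, t) * a (x, t) * fderiv ℝ a (x, t) (0, 1)
      + 2 * W (x, t) * ∑ i, b i (x, t) * fderiv ℝ (b i) (x, t) (0, 1) := by
    have h1 := aux_fd (aux_diff hW) (aux_diff ha) (fun i => aux_diff (hb i)) (x, t) (0, 1)
    have h3 : fderiv ℝ W (x, t) (0, 1) = W (x, t) * (2 * s * (phi x₀ β C₀ l x t *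
        (l * (- 2 * β * t)))) := by
      refine (aux_psi x₀ β C₀ l s (x, t) (0, 1)).trans ?_
      simp [hWd]
    have h4 : ∑ i, 2 * b i (x, t) * fderiv ℝ (b i) (x, t) (0, 1) =
        2 * ∑ i, b i (x, t) * fderiv ℝ (b i) (x, t) (0, 1) := by
      rw [Finset.mul_sum]
      exact Finset.sum_congr rfl fun i _ => by ring
    refine h1.trans ?_
    rw [h3, h4]
    ring
  have hfx : f (x, t) = fderiv ℝ a (x, t) (0, 1) - ∑ i, fderiv ℝ (b i) (x, t) (ei i) := rfl
  have hex : e (x, t) = W (x, t) * (a (x, t) ^ 2 + ∑ i, b i (x, t) ^ 2) := rfl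
  have hFx : F (x, t) = W (x, t) * f (x, t) ^ 2 := rfl
  rw [hsum, het, hex, hFx]
  rw [← hc, mul_assoc 2 s c] at key
  refine le_trans (le_of_eq ?_) key
  rw [hfx]
  ring
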